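/- (Zygmund–Bonami inequality of order τ) Let τ be a positive integer and f ∈ L log^{τ/2}L([0,1]). Then (Σ_{λ ∈ lac_τ, |λ's associated interval length| ≥ 1} |f̂(λ)|²)^{1/2} ≲_τ ‖f‖_{L log^{τ/2}L}, where f̂(λ) = ∫_{[0,1]} f(x) e^{−2πiλx} dx. -/

import Mathlib

open MeasureTheory Real Set

noncomputable section

/-- The Young function `B_σ(t) = t (log(e + t))^σ`. -/
noncomputable def Bfun (σ t : ℝ) : ℝ := t * (Real.log (Real.exp 1 + t)) ^ σ

/-- An interval, represented by its pair of endpoints, is dyadic. -/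
def IsDyadicI (p : ℝ × ℝ) : Prop := ∃ k n : ℤ, p.1 = n * (2:ℝ)^k ∧ p.2 = (n+1) * (2:ℝ)^k

/-- The Whitney partition of the interval `I = [I.1, I.2)`: the maximal dyadic subintervals
`L ⊆ I` with `dist(L, ℝ \ I) = |L|`. -/
def WhitneyP (I : ℝ × ℝ) : Set (ℝ × ℝ) :=
  {L | IsDyadicI L ∧ I.1 ≤ L.1 ∧ L.2 ≤ I.2 ∧
       min (L.1 - I.1) (I.2 - L.2) = L.2 - L.1 ∧
       ∀ L' : ℝ × ℝ, IsDyadicI L' → I.1 ≤ L'.1 → L'.2 ≤ I.2 →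
         min (L'.1 - I.1) (I.2 - L'.2) = L'.2 - L'.1 →
         L'.1 ≤ L.1 → L.2 ≤ L'.2 → L = L'}

/-- The standard Littlewood–Paley collection of intervals of order `τ`:
`Λ₁ = {±[2^k, 2^(k+1))}`, and `Λ_(τ+1) = ⋃_{I ∈ Λ_τ} W(I)`. -/
def Lambda : ℕ → Set (ℝ × ℝ)
  | 0 => ∅
  | 1 => {p | ∃ k : ℤ, p = ((2:ℝ)^k, (2:ℝ)^(k+1)) ∨ p = (-(2:ℝ)^(k+1), -(2:ℝ)^k)}
  | (n+2) => ⋃ I ∈ Lambda (n+1), WhitneyP I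

/-- The set of endpoints of intervals of `Λ_τ` (with `lac_0 = {0}`). -/
def lac (τ : ℕ) : Set ℝ :=
  if τ = 0 then {0} else {x | ∃ p ∈ Lambda τ, x = p.1 ∨ x = p.2}

/-- The truncated lacunary set `lac_τ^n`: endpoints of intervals in `Λ_τ` of length `≥ n`. -/
def lacT (τ : ℕ) (n : ℝ) : Set ℝ :=
  if τ = 0 then {0} else {x | ∃ p ∈ Lambda τ, n ≤ p.2 - p.1 ∧ (x = p.1 ∨ x = p.2)}

/-!
An endpoint of a lacunary interval of order `τ` and length at least `1` is an integer with at most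
`τ` nonzero digits in its non-adjacent form. If `P = ∑ c_z exp (2πi z x)` has only such
frequencies, then `‖P‖_{2q} ≤ K q^{τ/2} ‖c‖₂` for all `q ≥ 1`. By a Young-type inequality, functions
whose moments grow at this rate can be paired with `L log^{τ/2} L`. Pairing `f` with the conjugate
of the `P` whose coefficients are the values of `f̂` gives the theorem.

For the moment bound, convolution with a probability measure does not increase `L^{2q}` norms, and
for all signs `r_j` an average of Riesz products is a measure whose Fourier coefficient at `z` is
the product of `r_j / 8` over the positions `j` of the nonzero digits of `z`. Hence each `c_z` may
be multiplied by the product of the signs at these positions, at the cost of a factor `8` per digit.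
After averaging over the signs, the bound becomes Bonami's inequality on the cube.
-/

open scoped Finset

/-! ### Non-adjacent forms -/

/-- The set of positions of the nonzero digits in the non-adjacent form of `z`, the unique
expansion `z = ∑ ε_j 2^j` with digits `ε_j ∈ {-1, 0, 1}` no two consecutive ones of which are
nonzero. Its cardinality is the least number of signed powers of two that sum to `z`. -/
def nafSupport (z : ℤ) : Finset ℕ :=
  if z = 0 then ∅
  else if Even z then (nafSupport (z / 2)).map (addRightEmbedding 1)
  else insert 0 ((nafSupport (2 * ((z + 1) / 4))).map (addRightEmbedding 1))
termination_by z.natAbs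
decreasing_by all_goals grind

lemma nafSupport_zero : nafSupport 0 = ∅ := by
  rw [nafSupport, if_pos rfl]

lemma nafSupport_two_mul (m : ℤ) :
    nafSupport (2 * m) = (nafSupport m).map (addRightEmbedding 1) := by
  rcases eq_or_ne m 0 with rfl | hm
  · simp [nafSupport_zero]
  · rw [nafSupport, if_neg (by omega), if_pos (even_two_mul m),
      Int.mul_ediv_cancel_left m two_ne_zero]

lemma nafSupport_two_mul_add {m ε : ℤ} (hm : Even m) (hε : ε = 1 ∨ ε = -1) :
    nafSupport (2 * m + ε) = insert 0 ((nafSupport m).map (addRightEmbedding 1)) := by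
  obtain ⟨k, rfl⟩ := hm
  rw [nafSupport, if_neg (by omega), if_neg (by grind),
    show 2 * ((2 * (k + k) + ε + 1) / 4) = k + k by omega]

lemma eq_two_mul_or_eq_two_mul_add (z : ℤ) :
    (∃ m, z = 2 * m) ∨ ∃ m ε, Even m ∧ (ε = 1 ∨ ε = -1) ∧ z = 2 * m + ε := by
  rcases Int.even_or_odd' z with ⟨m, rfl | rfl⟩
  · exact .inl ⟨m, rfl⟩
  · rcases Int.even_or_odd m with hm | hm
    · exact .inr ⟨m, 1, hm, .inl rfl, rfl⟩
    · exact .inr ⟨m + 1, -1, hm.add_one, .inr rfl, by ring⟩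

lemma naf_induction {motive : ℤ → Prop} (zero : motive 0)
    (two_mul : ∀ m, motive m → motive (2 * m))
    (two_mul_add : ∀ m ε, Even m → (ε = 1 ∨ ε = -1) → motive m → motive (2 * m + ε)) (z : ℤ) :
    motive z := by
  induction hn : z.natAbs using Nat.strong_induction_on generalizing z with
  | _ n ih =>
    subst hn
    rcases eq_or_ne z 0 with rfl | hz
    · exact zero
    rcases eq_two_mul_or_eq_two_mul_add z with ⟨m, rfl⟩ | ⟨m, ε, hm, hε, rfl⟩
    · exact two_mul m (ih _ (by omega) m rfl)
    · exact two_mul_add m ε hm hε (ih _ (by grind) m rfl)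

lemma card_nafSupport_two_mul (m : ℤ) : #(nafSupport (2 * m)) = #(nafSupport m) := by
  rw [nafSupport_two_mul, Finset.card_map]

lemma card_nafSupport_two_mul_add {m ε : ℤ} (hm : Even m) (hε : ε = 1 ∨ ε = -1) :
    #(nafSupport (2 * m + ε)) = #(nafSupport m) + 1 := by
  rw [nafSupport_two_mul_add hm hε, Finset.card_insert_of_notMem (by simp), Finset.card_map]

lemma nafSupport_neg (z : ℤ) : nafSupport (-z) = nafSupport z := by
  induction z using naf_induction with
  | zero => rfl
  | two_mul m ih => rw [← mul_neg, nafSupport_two_mul, nafSupport_two_mul, ih]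
  | two_mul_add m ε hm hε ih =>
    rw [neg_add, ← mul_neg, nafSupport_two_mul_add hm hε,
      nafSupport_two_mul_add hm.neg (by omega), ih]

lemma card_nafSupport_add_one_le (z : ℤ) :
    #(nafSupport (z + 1)) ≤ #(nafSupport z) + 1 ∧
      (Odd z → #(nafSupport (z + 1)) ≤ #(nafSupport z)) := by
  induction z using naf_induction with
  | zero =>
    refine ⟨?_, by simp⟩
    rw [show (0 : ℤ) + 1 = 2 * 0 + 1 from rfl, card_nafSupport_two_mul_add .zero (.inl rfl)]
  | two_mul m ih =>
    refine ⟨?_, fun h => absurd h (by simp)⟩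
    rw [card_nafSupport_two_mul]
    rcases Int.even_or_odd m with hm | hm
    · rw [card_nafSupport_two_mul_add hm (.inl rfl)]
    · rw [show 2 * m + 1 = 2 * (m + 1) + -1 by ring,
        card_nafSupport_two_mul_add hm.add_one (.inr rfl)]
      exact Nat.add_le_add_right (ih.2 hm) 1
  | two_mul_add m ε hm hε ih =>
    suffices h : #(nafSupport (2 * m + ε + 1)) ≤ #(nafSupport (2 * m + ε)) from
      ⟨h.trans (Nat.le_succ _), fun _ => h⟩
    rw [card_nafSupport_two_mul_add hm hε]
    rcases hε with rfl | rfl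
    · rw [show 2 * m + 1 + 1 = 2 * (m + 1) by ring, card_nafSupport_two_mul]
      exact ih.1
    · rw [neg_add_cancel_right, card_nafSupport_two_mul]
      exact Nat.le_succ _

lemma card_nafSupport_add_two_le {m ε : ℤ} (hm : Even m) (hε : ε = 1 ∨ ε = -1) :
    #(nafSupport (2 * m + ε + 2)) ≤ #(nafSupport (2 * m + ε)) + 1 := by
  rw [card_nafSupport_two_mul_add hm hε]
  rcases hε with rfl | rfl
  · obtain ⟨k, rfl⟩ := hm.two_dvd
    rw [show 2 * (2 * k) + 1 + 2 = 2 * (2 * (k + 1)) + -1 by ring,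
      card_nafSupport_two_mul_add (even_two_mul _) (.inr rfl), card_nafSupport_two_mul,
      card_nafSupport_two_mul]
    exact Nat.add_le_add_right (card_nafSupport_add_one_le k).1 1
  · rw [show 2 * m + -1 + 2 = 2 * m + 1 by ring, card_nafSupport_two_mul_add hm (.inl rfl)]
    exact Nat.le_succ _

lemma card_nafSupport_add_two_pow_le (n : ℕ) (z : ℤ) :
    #(nafSupport (z + 2 ^ n)) ≤ #(nafSupport z) + 1 := by
  induction n generalizing z with
  | zero => exact (card_nafSupport_add_one_le z).1
  | succ n ih =>
    rcases eq_two_mul_or_eq_two_mul_add z with ⟨m, rfl⟩ | ⟨m, ε, hm, hε, rfl⟩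
    · rw [pow_succ', ← mul_add, card_nafSupport_two_mul, card_nafSupport_two_mul]
      exact ih m
    · rcases n with _ | n
      · simpa using card_nafSupport_add_two_le hm hε
      · have hm' : Even (m + 2 ^ (n + 1)) := hm.add (even_two.pow_of_ne_zero n.succ_ne_zero)
        rw [show 2 * m + ε + 2 ^ (n + 1 + 1) = 2 * (m + 2 ^ (n + 1)) + ε by ring,
          card_nafSupport_two_mul_add hm' hε, card_nafSupport_two_mul_add hm hε]
        exact Nat.add_le_add_right (ih m) 1

lemma card_nafSupport_sub_two_pow_le (n : ℕ) (z : ℤ) :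
    #(nafSupport (z - 2 ^ n)) ≤ #(nafSupport z) + 1 := by
  rw [← nafSupport_neg, ← nafSupport_neg z, neg_sub, sub_eq_neg_add]
  exact card_nafSupport_add_two_pow_le n (-z)

lemma exists_sum_nafSupport_eq (z : ℤ) :
    ∃ d : ℕ → ℤ, (∀ j, d j = 1 ∨ d j = -1) ∧ ∑ j ∈ nafSupport z, d j * 2 ^ j = z := by
  induction z using naf_induction with
  | zero => exact ⟨1, fun _ => .inl rfl, by simp [nafSupport_zero]⟩
  | two_mul m ih =>
    obtain ⟨d, hd, hm⟩ := ih
    refine ⟨fun j => d (j - 1), fun j => hd _, ?_⟩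
    simp only [nafSupport_two_mul, Finset.sum_map, addRightEmbedding_apply, add_tsub_cancel_right,
      pow_succ, ← mul_assoc, ← Finset.sum_mul, hm]
    ring
  | two_mul_add m ε hm hε ih =>
    obtain ⟨d, hd, hm'⟩ := ih
    refine ⟨fun j => if j = 0 then ε else d (j - 1), fun j => ?_, ?_⟩
    · dsimp only; split_ifs; exacts [hε, hd _]
    · rw [nafSupport_two_mul_add hm hε, Finset.sum_insert (by simp), Finset.sum_map]
      simp only [addRightEmbedding_apply, Nat.add_eq_zero_iff, one_ne_zero, and_false, ↓reduceIte,
        pow_zero, mul_one, add_tsub_cancel_right, pow_succ, ← mul_assoc, ← Finset.sum_mul, hm']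
      ring

lemma eq_zero_of_nafSupport_eq_empty {z : ℤ} (hz : nafSupport z = ∅) : z = 0 := by
  obtain ⟨d, -, hd⟩ := exists_sum_nafSupport_eq z
  rw [← hd, hz, Finset.sum_empty]

lemma card_filter_nafSupport_eq_le (F : Finset ℤ) (S : Finset ℕ) :
    #{z ∈ F | nafSupport z = S} ≤ 2 ^ #S := by
  set e : Finset ℕ → ℤ := fun T => ∑ j ∈ S, (if j ∈ T then 1 else -1) * 2 ^ j
  rw [← Finset.card_powerset]
  refine (Finset.card_le_card fun z hz => ?_).trans (Finset.card_image_le (f := e))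
  obtain ⟨d, hd, hz'⟩ := exists_sum_nafSupport_eq z
  rw [(Finset.mem_filter.1 hz).2] at hz'
  refine Finset.mem_image.2 ⟨{j ∈ S | d j = 1}, by simp, ?_⟩
  refine .trans (Finset.sum_congr rfl fun j hj => ?_) hz'
  rcases hd j with h | h <;> simp [hj, h]

/-! ### Hypercontractivity on the cube -/

lemma add_pow_add_sub_pow_nonneg {a : ℝ} (ha : 0 ≤ a) (b : ℝ) (q : ℕ) :
    0 ≤ (a + b) ^ q + (a - b) ^ q ∧ 0 ≤ b * ((a + b) ^ q - (a - b) ^ q) := by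
  induction q with
  | zero => norm_num
  | succ q ih =>
    constructor
    · calc (0 : ℝ) ≤ a * ((a + b) ^ q + (a - b) ^ q) + b * ((a + b) ^ q - (a - b) ^ q) :=
            add_nonneg (mul_nonneg ha ih.1) ih.2
        _ = (a + b) ^ (q + 1) + (a - b) ^ (q + 1) := by ring
    · calc (0 : ℝ)
          ≤ a * (b * ((a + b) ^ q - (a - b) ^ q)) + b ^ 2 * ((a + b) ^ q + (a - b) ^ q) :=
            add_nonneg (mul_nonneg ha ih.2) (mul_nonneg (sq_nonneg b) ih.1)
        _ = b * ((a + b) ^ (q + 1) - (a - b) ^ (q + 1)) := by ring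

lemma mul_add_pow_sub_sub_pow_le {a : ℝ} (ha : 0 ≤ a) (b : ℝ) (q : ℕ) :
    b * ((a + b) ^ (q + 1) - (a - b) ^ (q + 1)) ≤
      (q + 1) * b ^ 2 * ((a + b) ^ q + (a - b) ^ q) := by
  induction q with
  | zero => norm_num; linarith
  | succ q ih =>
    have hD := (add_pow_add_sub_pow_nonneg ha b q).2
    calc b * ((a + b) ^ (q + 1 + 1) - (a - b) ^ (q + 1 + 1))
        = a * (b * ((a + b) ^ (q + 1) - (a - b) ^ (q + 1))) +
            b ^ 2 * ((a + b) ^ (q + 1) + (a - b) ^ (q + 1)) := by ring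
      _ ≤ a * ((q + 1) * b ^ 2 * ((a + b) ^ q + (a - b) ^ q)) +
            (q + 1) * b ^ 2 * (b * ((a + b) ^ q - (a - b) ^ q)) +
            b ^ 2 * ((a + b) ^ (q + 1) + (a - b) ^ (q + 1)) := by
          gcongr
          exact le_add_of_le_of_nonneg (mul_le_mul_of_nonneg_left ih ha) (by positivity)
      _ = ((q + 1 : ℕ) + 1) * b ^ 2 * ((a + b) ^ (q + 1) + (a - b) ^ (q + 1)) := by
          push_cast; ring

lemma add_pow_add_sub_pow_le {u v b : ℝ} (hu : 0 ≤ u) (hv : 0 ≤ v)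
    (hb : b ^ 2 ≤ 4 * u * v) (q : ℕ) :
    (u + v + b) ^ q + (u + v - b) ^ q ≤ 2 * (u + 4 * q * v) ^ q := by
  induction q using Nat.twoStepInduction with
  | zero => norm_num
  | one => norm_num; linarith
  | more q ih₀ ih₁ =>
    set a := u + v
    have ha : 0 ≤ a := add_nonneg hu hv
    set M := u + 4 * (q + 1 : ℕ) * v with hM
    have hMq : (u + 4 * q * v) ^ q ≤ M ^ q := by rw [hM]; gcongr; omega
    have hM0 : 0 ≤ M := by positivity
    have hA := (add_pow_add_sub_pow_nonneg ha b q).1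
    calc (a + b) ^ (q + 2) + (a - b) ^ (q + 2)
        = a * ((a + b) ^ (q + 1) + (a - b) ^ (q + 1)) +
            b * ((a + b) ^ (q + 1) - (a - b) ^ (q + 1)) := by ring
      _ ≤ a * (2 * M ^ (q + 1)) + (q + 1) * (4 * u * v) * (2 * M ^ q) := by
          refine add_le_add (mul_le_mul_of_nonneg_left ih₁ ha)
            ((mul_add_pow_sub_sub_pow_le ha b q).trans ?_)
          gcongr
          exact ih₀.trans (mul_le_mul_of_nonneg_left hMq zero_le_two)
      _ = 2 * (M ^ q * (a * M + 4 * (q + 1) * u * v)) := by ring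
      _ ≤ 2 * ((M + 4 * v) ^ q * (M + 4 * v) ^ 2) := by
          gcongr
          · linarith
          have hMM : (u + 4 * (q + 1) * v) * M = M * M := by rw [hM]; push_cast; ring
          have huM : u ≤ M := le_add_of_nonneg_right (by positivity)
          rw [show a * M = u * M + v * M from add_mul u v M]
          nlinarith [mul_nonneg hv hM0, sq_nonneg v,
            mul_le_mul_of_nonneg_left huM (by positivity : 0 ≤ 4 * (q + 1) * v)]
      _ = 2 * (u + 4 * (q + 2 : ℕ) * v) ^ (q + 2) := by rw [hM]; push_cast; ring

lemma sum_add_pow_le {ι : Type*} {s : Finset ι} {u v : ι → ℝ} {q : ℕ} {K U V : ℝ} (hq : 1 ≤ q)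
    (hu : ∀ i ∈ s, 0 ≤ u i) (hv : ∀ i ∈ s, 0 ≤ v i) (hU : 0 ≤ U) (hV : 0 ≤ V) (hK : 0 ≤ K)
    (hsu : ∑ i ∈ s, u i ^ q ≤ K * U ^ q) (hsv : ∑ i ∈ s, v i ^ q ≤ K * V ^ q) :
    ∑ i ∈ s, (u i + v i) ^ q ≤ K * (U + V) ^ q := by
  have hq₀ : q ≠ 0 := by omega
  have root_le {w : ι → ℝ} {W : ℝ} (hw : ∀ i ∈ s, 0 ≤ w i) (hW : 0 ≤ W)
      (h : ∑ i ∈ s, w i ^ q ≤ K * W ^ q) :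
      (∑ i ∈ s, w i ^ q) ^ (q⁻¹ : ℝ) ≤ K ^ (q⁻¹ : ℝ) * W := by
    rw [← Real.pow_rpow_inv_natCast hW hq₀, ← Real.mul_rpow hK (by positivity)]
    exact Real.rpow_le_rpow (Finset.sum_nonneg fun i hi => pow_nonneg (hw i hi) q) h
      (by positivity)
  have minkowski := Real.Lp_add_le_of_nonneg s (Nat.one_le_cast.2 hq) hu hv
  simp only [Real.rpow_natCast, one_div] at minkowski
  have hsum : 0 ≤ ∑ i ∈ s, (u i + v i) ^ q :=
    Finset.sum_nonneg fun i hi => pow_nonneg (add_nonneg (hu i hi) (hv i hi)) q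
  calc ∑ i ∈ s, (u i + v i) ^ q
      = ((∑ i ∈ s, (u i + v i) ^ q) ^ (q⁻¹ : ℝ)) ^ q := (Real.rpow_inv_natCast_pow hsum hq₀).symm
    _ ≤ (K ^ (q⁻¹ : ℝ) * (U + V)) ^ q := by
        gcongr
        exact minkowski.trans ((add_le_add (root_le hu hU hsu) (root_le hv hV hsv)).trans_eq
          (mul_add _ _ _).symm)
    _ = K * (U + V) ^ q := by rw [mul_pow, Real.rpow_inv_natCast_pow hK hq₀]

section Walsh

variable {ι : Type*} [DecidableEq ι]

/-- The Walsh function `x ↦ ∏_{j ∈ S} x_j` on the cube `{-1, 1}^ι`, where the point `x` is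
encoded as the set `A` of those `j` with `x_j = -1`. -/
def walsh (A S : Finset ι) : ℝ := ∏ j ∈ S, if j ∈ A then -1 else 1

lemma walsh_insert_left {i : ι} {A S : Finset ι} (hS : i ∉ S) :
    walsh (insert i A) S = walsh A S :=
  Finset.prod_congr rfl fun j hj => by simp [ne_of_mem_of_not_mem hj hS]

lemma walsh_insert_right {i : ι} {A S : Finset ι} (hA : i ∉ A) (hS : i ∉ S) :
    walsh A (insert i S) = walsh A S := by
  simp [walsh, Finset.prod_insert hS, hA]

lemma walsh_insert_insert {i : ι} {A S : Finset ι} (hS : i ∉ S) :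
    walsh (insert i A) (insert i S) = -walsh A S := by
  rw [← walsh_insert_left (A := A) hS, walsh, Finset.prod_insert hS,
    if_pos (Finset.mem_insert_self i A), neg_one_mul, walsh]

lemma walsh_mul_self (A S : Finset ι) : walsh A S * walsh A S = 1 := by
  rw [walsh, ← Finset.prod_mul_distrib]
  exact Finset.prod_eq_one fun j _ => by split_ifs <;> norm_num

variable {E : Type*} [NormedAddCommGroup E] [InnerProductSpace ℝ E]

lemma norm_add_pow_add_norm_sub_pow_le (q : ℕ) (g h : E) :
    ‖g + h‖ ^ (2 * q) + ‖g - h‖ ^ (2 * q) ≤ 2 * (‖g‖ ^ 2 + 4 * q * ‖h‖ ^ 2) ^ q := by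
  have hb : (2 * inner ℝ g h) ^ 2 ≤ 4 * ‖g‖ ^ 2 * ‖h‖ ^ 2 := by
    have := sq_le_sq' (neg_le_of_abs_le (abs_real_inner_le_norm g h)) (real_inner_le_norm g h)
    linarith
  rw [pow_mul, pow_mul, norm_add_sq_real, norm_sub_sq_real, add_right_comm, sub_add_eq_add_sub]
  exact add_pow_add_sub_pow_le (sq_nonneg _) (sq_nonneg _) hb q

lemma sum_walsh_smul_insert {i : ι} {s A : Finset ι} (hi : i ∉ s) (hA : A ⊆ s)
    (a : Finset ι → E) :
    ∑ S ∈ (insert i s).powerset, walsh A S • a S =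
      ∑ S ∈ s.powerset, walsh A S • a S + ∑ S ∈ s.powerset, walsh A S • a (insert i S) := by
  rw [Finset.sum_powerset_insert hi]
  congr 1
  refine Finset.sum_congr rfl fun S hS => ?_
  rw [walsh_insert_right (Finset.notMem_mono hA hi)
    (Finset.notMem_of_mem_powerset_of_notMem hS hi)]

lemma sum_walsh_insert_smul_insert {i : ι} {s : Finset ι} (hi : i ∉ s) (A : Finset ι)
    (a : Finset ι → E) :
    ∑ S ∈ (insert i s).powerset, walsh (insert i A) S • a S =
      ∑ S ∈ s.powerset, walsh A S • a S - ∑ S ∈ s.powerset, walsh A S • a (insert i S) := by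
  rw [Finset.sum_powerset_insert hi, sub_eq_add_neg, ← Finset.sum_neg_distrib]
  congr 1 <;> refine Finset.sum_congr rfl fun S hS => ?_
  · rw [walsh_insert_left (Finset.notMem_of_mem_powerset_of_notMem hS hi)]
  · rw [walsh_insert_insert (Finset.notMem_of_mem_powerset_of_notMem hS hi), neg_smul]

lemma sum_powerset_insert_pow_card_mul {i : ι} {s : Finset ι} (hi : i ∉ s) (r : ℝ)
    (f : Finset ι → ℝ) :
    ∑ S ∈ (insert i s).powerset, r ^ #S * f S =
      ∑ S ∈ s.powerset, r ^ #S * f S + r * ∑ S ∈ s.powerset, r ^ #S * f (insert i S) := by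
  rw [Finset.sum_powerset_insert hi, Finset.mul_sum]
  congr 1
  refine Finset.sum_congr rfl fun S hS => ?_
  rw [Finset.card_insert_of_notMem (Finset.notMem_of_mem_powerset_of_notMem hS hi), pow_succ',
    mul_assoc]

/-- Bonami's hypercontractive inequality on the cube. -/
lemma sum_norm_sum_walsh_smul_pow_le {q : ℕ} (hq : 1 ≤ q) (s : Finset ι) (a : Finset ι → E) :
    ∑ A ∈ s.powerset, ‖∑ S ∈ s.powerset, walsh A S • a S‖ ^ (2 * q) ≤
      2 ^ #s * (∑ S ∈ s.powerset, (4 * q : ℝ) ^ #S * ‖a S‖ ^ 2) ^ q := by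
  induction s using Finset.induction_on generalizing a with
  | empty => simp [walsh, pow_mul]
  | insert i s hi ih =>
    set g : Finset ι → E := fun A => ∑ S ∈ s.powerset, walsh A S • a S
    set h : Finset ι → E := fun A => ∑ S ∈ s.powerset, walsh A S • a (insert i S)
    set G := ∑ S ∈ s.powerset, (4 * q : ℝ) ^ #S * ‖a S‖ ^ 2
    set H := ∑ S ∈ s.powerset, (4 * q : ℝ) ^ #S * ‖a (insert i S)‖ ^ 2
    rw [Finset.sum_powerset_insert hi, ← Finset.sum_add_distrib,
      sum_powerset_insert_pow_card_mul hi, Finset.card_insert_of_notMem hi]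
    calc _ = ∑ A ∈ s.powerset, (‖g A + h A‖ ^ (2 * q) + ‖g A - h A‖ ^ (2 * q)) :=
          Finset.sum_congr rfl fun A hA => by
            rw [sum_walsh_smul_insert hi (Finset.mem_powerset.1 hA),
              sum_walsh_insert_smul_insert hi]
      _ ≤ ∑ A ∈ s.powerset, 2 * (‖g A‖ ^ 2 + 4 * q * ‖h A‖ ^ 2) ^ q :=
          Finset.sum_le_sum fun A _ => norm_add_pow_add_norm_sub_pow_le q _ _
      _ ≤ 2 * (2 ^ #s * (G + 4 * q * H) ^ q) := by
          rw [← Finset.mul_sum]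
          gcongr
          refine sum_add_pow_le hq (fun _ _ => by positivity) (fun _ _ => by positivity)
            (by positivity) (by positivity) (by positivity) ?_ ?_
          · simpa only [← pow_mul] using ih a
          · simp only [mul_pow _ _ q, ← Finset.mul_sum, ← pow_mul _ 2 q]
            rw [mul_left_comm]
            gcongr
            exact ih _
      _ = 2 ^ (#s + 1) * (G + 4 * q * H) ^ q := by ring

end Walsh

lemma sum_norm_sum_walsh_nafSupport_smul_pow_le {E : Type*} [NormedAddCommGroup E]
    [InnerProductSpace ℝ E] {q : ℕ} (hq : 1 ≤ q) {s : Finset ℕ} {F : Finset ℤ}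
    (hF : ∀ z ∈ F, nafSupport z ⊆ s) (b : ℤ → E) :
    ∑ A ∈ s.powerset, ‖∑ z ∈ F, walsh A (nafSupport z) • b z‖ ^ (2 * q) ≤
      2 ^ #s * (∑ z ∈ F, (8 * q : ℝ) ^ #(nafSupport z) * ‖b z‖ ^ 2) ^ q := by
  have maps : ∀ z ∈ F, nafSupport z ∈ s.powerset := fun z hz => Finset.mem_powerset.2 (hF z hz)
  set a : Finset ℕ → E := fun S => ∑ z ∈ F with nafSupport z = S, b z
  have norm_a_sq_le (S) : ‖a S‖ ^ 2 ≤ 2 ^ #S * ∑ z ∈ F with nafSupport z = S, ‖b z‖ ^ 2 := by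
    calc ‖a S‖ ^ 2 ≤ (∑ z ∈ F with nafSupport z = S, ‖b z‖) ^ 2 := by
          gcongr; exact norm_sum_le _ _
      _ ≤ #{z ∈ F | nafSupport z = S} * ∑ z ∈ F with nafSupport z = S, ‖b z‖ ^ 2 :=
          sq_sum_le_card_mul_sum_sq
      _ ≤ _ := by gcongr; exact_mod_cast card_filter_nafSupport_eq_le F S
  calc ∑ A ∈ s.powerset, ‖∑ z ∈ F, walsh A (nafSupport z) • b z‖ ^ (2 * q)
      = ∑ A ∈ s.powerset, ‖∑ S ∈ s.powerset, walsh A S • a S‖ ^ (2 * q) := by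
        refine Finset.sum_congr rfl fun A _ => ?_
        rw [← Finset.sum_fiberwise_of_maps_to maps]
        congr 2
        refine Finset.sum_congr rfl fun S _ => ?_
        rw [Finset.smul_sum]
        exact Finset.sum_congr rfl fun z hz => by rw [(Finset.mem_filter.1 hz).2]
    _ ≤ 2 ^ #s * (∑ S ∈ s.powerset, (4 * q : ℝ) ^ #S * ‖a S‖ ^ 2) ^ q :=
        sum_norm_sum_walsh_smul_pow_le hq s a
    _ ≤ 2 ^ #s * (∑ z ∈ F, (8 * q : ℝ) ^ #(nafSupport z) * ‖b z‖ ^ 2) ^ q := by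
        gcongr
        rw [← Finset.sum_fiberwise_of_maps_to maps]
        refine Finset.sum_le_sum fun S _ => ?_
        calc (4 * q : ℝ) ^ #S * ‖a S‖ ^ 2
            ≤ (4 * q : ℝ) ^ #S * (2 ^ #S * ∑ z ∈ F with nafSupport z = S, ‖b z‖ ^ 2) := by
              gcongr; exact norm_a_sq_le S
          _ = ∑ z ∈ F with nafSupport z = S, (8 * q : ℝ) ^ #(nafSupport z) * ‖b z‖ ^ 2 := by
              rw [← mul_assoc, ← mul_pow, Finset.mul_sum]
              exact Finset.sum_congr rfl fun z hz => by
                rw [(Finset.mem_filter.1 hz).2]; ring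

/-! ### Riesz products along non-adjacent forms -/

/-- The Fourier transforms of the finitely supported probability measures on the circle, that is
the convex combinations of the characters `z ↦ ζ ^ z` of `ℤ`. -/
def finTransforms : Set (ℤ → ℂ) :=
  convexHull ℝ ((fun (ζ : ℂ) (z : ℤ) => ζ ^ z) '' Metric.sphere 0 1)

lemma zpow_mem_finTransforms {ζ : ℂ} (hζ : ‖ζ‖ = 1) :
    (fun z : ℤ => ζ ^ z) ∈ finTransforms :=
  subset_convexHull ℝ _ ⟨ζ, mem_sphere_zero_iff_norm.2 hζ, rfl⟩

lemma convex_finTransforms : Convex ℝ finTransforms := convex_convexHull ℝ _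

lemma add_half_mem_finTransforms {φ ψ : ℤ → ℂ} (hφ : φ ∈ finTransforms)
    (hψ : ψ ∈ finTransforms) : (1 / 2 : ℝ) • φ + (1 / 2 : ℝ) • ψ ∈ finTransforms :=
  convex_finTransforms hφ hψ (by norm_num) (by norm_num) (by norm_num)

lemma map_mem_finTransforms {T : (ℤ → ℂ) →ₗ[ℝ] (ℤ → ℂ)}
    (hT : ∀ ζ : ℂ, ‖ζ‖ = 1 → T (fun z => ζ ^ z) ∈ finTransforms) {φ : ℤ → ℂ}
    (hφ : φ ∈ finTransforms) : T φ ∈ finTransforms := by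
  refine convexHull_min ?_ (convex_finTransforms.linear_preimage T) hφ
  rintro _ ⟨ζ, hζ, rfl⟩
  exact hT ζ (mem_sphere_zero_iff_norm.1 hζ)

/-- Restriction of a function on `ℤ` to the even integers. On the side of measures, this is the
average of a measure and its translate by `1 / 2`. -/
def evenPart : (ℤ → ℂ) →ₗ[ℝ] (ℤ → ℂ) where
  toFun φ z := if Even z then φ z else 0
  map_add' φ ψ := by ext z; dsimp only [Pi.add_apply]; split_ifs <;> simp
  map_smul' c φ := by ext z; dsimp only [Pi.smul_apply]; split_ifs <;> simp

lemma evenPart_apply_of_even (φ : ℤ → ℂ) {z : ℤ} (hz : Even z) : evenPart φ z = φ z := if_pos hz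

lemma evenPart_apply_of_odd (φ : ℤ → ℂ) {z : ℤ} (hz : Odd z) : evenPart φ z = 0 :=
  if_neg (Int.not_even_iff_odd.2 hz)

lemma evenPart_mem_finTransforms {φ : ℤ → ℂ} (hφ : φ ∈ finTransforms) :
    evenPart φ ∈ finTransforms := by
  refine map_mem_finTransforms (fun ζ hζ => ?_) hφ
  convert add_half_mem_finTransforms (zpow_mem_finTransforms hζ)
    (zpow_mem_finTransforms ((norm_neg ζ).trans hζ)) using 1
  ext z
  simp only [Pi.add_apply, Pi.smul_apply]
  rcases Int.even_or_odd z with hz | hz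
  · rw [evenPart_apply_of_even _ hz, hz.neg_zpow, ← add_smul]; norm_num
  · rw [evenPart_apply_of_odd _ hz, hz.neg_zpow, smul_neg, add_neg_cancel]

/-- The operation on Fourier coefficients that takes a measure `μ` on the circle to its pullback
`μ'` under `x ↦ 2 x`, normalized to the same mass, multiplied by `1 + r cos (2 π x)`. -/
def rieszStep (r : ℝ) : (ℤ → ℂ) →ₗ[ℝ] (ℤ → ℂ) where
  toFun φ z := if Even z then φ (z / 2) else (r / 2) • (φ (z / 2) + φ (z / 2 + 1))
  map_add' φ ψ := by ext z; dsimp only [Pi.add_apply]; split_ifs <;> module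
  map_smul' c φ := by
    ext z; dsimp only [Pi.smul_apply, RingHom.id_apply]; split_ifs <;> module

lemma rieszStep_two_mul (r : ℝ) (φ : ℤ → ℂ) (m : ℤ) : rieszStep r φ (2 * m) = φ m :=
  (if_pos (even_two_mul m)).trans (by rw [Int.mul_ediv_cancel_left m two_ne_zero])

lemma rieszStep_two_mul_add_one (r : ℝ) (φ : ℤ → ℂ) (m : ℤ) :
    rieszStep r φ (2 * m + 1) = (r / 2) • (φ m + φ (m + 1)) :=
  (if_neg (by simp)).trans (by rw [show (2 * m + 1) / 2 = m by omega])

lemma rieszStep_two_mul_add (r : ℝ) (φ : ℤ → ℂ) (m : ℤ) {ε : ℤ} (hε : ε = 1 ∨ ε = -1) :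
    rieszStep r φ (2 * m + ε) = (r / 2) • (φ m + φ (m + ε)) := by
  rcases hε with rfl | rfl
  · exact rieszStep_two_mul_add_one r φ m
  · rw [show 2 * m + -1 = 2 * (m + -1) + 1 by ring, rieszStep_two_mul_add_one,
      neg_add_cancel_right, add_comm]

lemma rieszStep_zpow (r : ℝ) {η : ℂ} (hη : ‖η‖ = 1) :
    rieszStep r (fun z => (η ^ 2) ^ z) =
      ((1 + r * η.re) / 2) • (fun z : ℤ => η ^ z) +
        ((1 - r * η.re) / 2) • (fun z : ℤ => (-η) ^ z) := by
  have hη₀ : η ≠ 0 := norm_ne_zero_iff.1 (hη ▸ one_ne_zero)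
  have hre : 2 * η.re * η = 1 + η ^ 2 := by
    have : η * (starRingEnd ℂ) η = 1 := by simp [Complex.mul_conj', hη]
    have hadd := Complex.add_conj η
    push_cast at hadd
    linear_combination (-η) * hadd + this
  ext z
  simp only [Pi.add_apply, Pi.smul_apply, Complex.real_smul]
  rcases Int.even_or_odd' z with ⟨m, rfl | rfl⟩
  · rw [rieszStep_two_mul, (even_two_mul m).neg_zpow, zpow_mul, zpow_ofNat]
    push_cast; ring
  · rw [rieszStep_two_mul_add_one, (odd_two_mul_add_one m).neg_zpow, zpow_add₀ hη₀, zpow_mul,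
      zpow_ofNat, zpow_one, zpow_add_one₀ (pow_ne_zero 2 hη₀), Complex.real_smul]
    push_cast
    linear_combination (-(r / 2) * (η ^ 2) ^ m) * hre

lemma rieszStep_mem_finTransforms {r : ℝ} (hr : |r| ≤ 1) {φ : ℤ → ℂ} (hφ : φ ∈ finTransforms) :
    rieszStep r φ ∈ finTransforms := by
  refine map_mem_finTransforms (fun ζ hζ => ?_) hφ
  obtain ⟨η, rfl⟩ := IsAlgClosed.exists_pow_nat_eq ζ two_pos
  have hη : ‖η‖ = 1 := by
    rwa [norm_pow, pow_eq_one_iff_of_nonneg (norm_nonneg η) two_ne_zero] at hζ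
  have hre : |r * η.re| ≤ 1 := by
    rw [abs_mul]
    exact mul_le_one₀ hr (abs_nonneg _) ((Complex.abs_re_le_norm η).trans_eq hη)
  rw [rieszStep_zpow r hη]
  exact convex_finTransforms (zpow_mem_finTransforms hη)
    (zpow_mem_finTransforms ((norm_neg η).trans hη)) (by linarith [neg_le_of_abs_le hre])
    (by linarith [le_of_abs_le hre]) (by ring)

lemma subset_range_of_map_subset {S : Finset ℕ} {N : ℕ}
    (hS : S.map (addRightEmbedding 1) ⊆ Finset.range (N + 1)) : S ⊆ Finset.range N :=
  fun j hj => by simpa using hS (Finset.mem_map_of_mem _ hj)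

/-- The measure is the average, over the sets `J` of positions without two consecutive elements
obtained by independent coin tosses `ω` as `J = {j | ω_j = 1, ω_{j+1} = 0}`, of the Riesz products
`∏_{j ∈ J} (1 + r_j cos (2 π 2^j x))`, whose frequencies are in non-adjacent form. The factor `2`
at odd integers corresponds to the condition `ω_0 = 1`. -/
lemma exists_mem_finTransforms_eq_ite_mul_prod (N : ℕ) {r : ℕ → ℝ} (hr : ∀ j, |r j| ≤ 1) :
    ∃ ψ ∈ finTransforms, ∀ z : ℤ, nafSupport z ⊆ Finset.range N →
      ψ z = (if Even z then 1 else 2) * ∏ j ∈ nafSupport z, (r j / 8 : ℂ) := by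
  induction N generalizing r with
  | zero =>
    refine ⟨_, zpow_mem_finTransforms norm_one, fun z hz => ?_⟩
    rw [eq_zero_of_nafSupport_eq_empty (Finset.subset_empty.1 hz)]
    simp [nafSupport_zero]
  | succ N ih =>
    obtain ⟨ψ, hψ, hψz⟩ := ih fun j => hr (j + 1)
    refine ⟨_, add_half_mem_finTransforms
      (rieszStep_mem_finTransforms (hr 0) (evenPart_mem_finTransforms hψ))
      (rieszStep_mem_finTransforms (r := 0) (by simp) hψ), fun z => ?_⟩
    have prod_map (S : Finset ℕ) : ∏ j ∈ S.map (addRightEmbedding 1), (r j / 8 : ℂ) =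
        ∏ j ∈ S, (r (j + 1) / 8 : ℂ) := Finset.prod_map _ _ _
    simp only [Pi.add_apply, Pi.smul_apply]
    rcases eq_two_mul_or_eq_two_mul_add z with ⟨m, rfl⟩ | ⟨m, ε, hm, hε, rfl⟩
    · rw [nafSupport_two_mul, rieszStep_two_mul, rieszStep_two_mul, if_pos (even_two_mul m),
        prod_map]
      intro hS
      have hψm := hψz m (subset_range_of_map_subset hS)
      rcases Int.even_or_odd m with hm | hm
      · rw [evenPart_apply_of_even _ hm, hψm, if_pos hm, ← add_smul]
        norm_num
      · rw [evenPart_apply_of_odd _ hm, hψm, if_neg (Int.not_even_iff_odd.2 hm), smul_zero,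
          zero_add, Complex.real_smul]
        push_cast; ring
    · rw [nafSupport_two_mul_add hm hε, rieszStep_two_mul_add _ _ _ hε,
        rieszStep_two_mul_add _ _ _ hε, if_neg (by grind), Finset.prod_insert (by simp), prod_map,
        evenPart_apply_of_even _ hm, evenPart_apply_of_odd _ (by grind)]
      intro hS
      have hψm := hψz m (subset_range_of_map_subset ((Finset.subset_insert 0 _).trans hS))
      rw [hψm, if_pos hm, zero_div, zero_smul, smul_zero, add_zero, add_zero, Complex.real_smul,
        Complex.real_smul]
      push_cast; ring

lemma exists_mem_finTransforms_eq_prod (N : ℕ) {r : ℕ → ℝ} (hr : ∀ j, |r j| ≤ 1) :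
    ∃ φ ∈ finTransforms, ∀ z : ℤ, nafSupport z ⊆ Finset.range N →
      φ z = ∏ j ∈ nafSupport z, (r j / 8 : ℂ) := by
  obtain ⟨ψ, hψ, hψz⟩ := exists_mem_finTransforms_eq_ite_mul_prod N hr
  refine ⟨_, add_half_mem_finTransforms hψ (evenPart_mem_finTransforms hψ), fun z hS => ?_⟩
  rw [Pi.add_apply, Pi.smul_apply, Pi.smul_apply, hψz z hS]
  rcases Int.even_or_odd z with hz | hz
  · rw [evenPart_apply_of_even _ hz, hψz z hS, if_pos hz, ← add_smul]
    norm_num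
  · rw [evenPart_apply_of_odd _ hz, if_neg (Int.not_even_iff_odd.2 hz), smul_zero, add_zero,
      Complex.real_smul]
    push_cast; ring

lemma exists_mem_finTransforms_eq_walsh_div (N : ℕ) (A : Finset ℕ) :
    ∃ φ ∈ finTransforms, ∀ z : ℤ, nafSupport z ⊆ Finset.range N →
      φ z = walsh A (nafSupport z) / 8 ^ #(nafSupport z) := by
  obtain ⟨φ, hφ, hφz⟩ := exists_mem_finTransforms_eq_prod N (r := fun j => if j ∈ A then -1 else 1)
    fun j => by split_ifs <;> simp
  refine ⟨φ, hφ, fun z hz => ?_⟩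
  rw [hφz z hz, Finset.prod_div_distrib, Finset.prod_const, walsh, Complex.ofReal_prod]

/-! ### Moments of trigonometric polynomials -/

lemma exists_nafSupport_subset_range (F : Finset ℤ) :
    ∃ N, ∀ z ∈ F, nafSupport z ⊆ Finset.range N := by
  obtain ⟨N, hN⟩ := (F.biUnion nafSupport).exists_nat_subset_range
  exact ⟨N, fun z hz => (Finset.subset_biUnion_of_mem nafSupport hz).trans hN⟩

/-- The trigonometric polynomial on the circle with coefficients `a` and frequencies in `F`. -/
def trigPoly (F : Finset ℤ) (a : ℤ → ℂ) (x : UnitAddCircle) : ℂ := ∑ z ∈ F, a z * fourier z x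

lemma trigPoly_congr {F : Finset ℤ} {a b : ℤ → ℂ} (h : ∀ z ∈ F, a z = b z) :
    trigPoly F a = trigPoly F b :=
  funext fun _ => Finset.sum_congr rfl fun z hz => by rw [h z hz]

lemma continuous_trigPoly (F : Finset ℤ) (a : ℤ → ℂ) : Continuous (trigPoly F a) := by
  unfold trigPoly; fun_prop

lemma trigPoly_fourier_mul (F : Finset ℤ) (a : ℤ → ℂ) (y : UnitAddCircle) :
    trigPoly F ((fun z => fourier z y) * a) = fun x => trigPoly F a (x + y) := by
  ext x
  refine Finset.sum_congr rfl fun z _ => ?_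
  simp only [Pi.mul_apply, fourier_apply, smul_add, AddCircle.toCircle_add, Circle.coe_mul]
  ring

lemma exists_fourier_eq_zpow {ζ : ℂ} (hζ : ‖ζ‖ = 1) :
    ∃ y : UnitAddCircle, (fun z : ℤ => (fourier z y : ℂ)) = fun z => ζ ^ z := by
  obtain ⟨y, hy⟩ := (AddCircle.homeomorphCircle (one_ne_zero (α := ℝ))).surjective
    ⟨ζ, mem_sphere_zero_iff_norm.2 hζ⟩
  rw [AddCircle.homeomorphCircle_apply] at hy
  exact ⟨y, funext fun z => by rw [fourier_apply, AddCircle.toCircle_zsmul, Circle.coe_zpow, hy]⟩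

lemma convex_setOf_eLpNorm_trigPoly_mul_le (F : Finset ℤ) (a : ℤ → ℂ) {p : ENNReal} (hp : 1 ≤ p)
    (K : ENNReal) : Convex ℝ {φ : ℤ → ℂ | eLpNorm (trigPoly F (φ * a)) p volume ≤ K} := by
  intro φ hφ ψ hψ s t hs ht hst
  have combine : trigPoly F ((s • φ + t • ψ) * a) =
      s • trigPoly F (φ * a) + t • trigPoly F (ψ * a) := by
    ext x
    simp only [trigPoly, Pi.add_apply, Pi.smul_apply, Pi.mul_apply, Finset.smul_sum,
      ← Finset.sum_add_distrib, Complex.real_smul]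
    exact Finset.sum_congr rfl fun z _ => by ring
  have meas (φ : ℤ → ℂ) : AEStronglyMeasurable (trigPoly F (φ * a)) volume :=
    (continuous_trigPoly F _).aestronglyMeasurable
  calc eLpNorm (trigPoly F ((s • φ + t • ψ) * a)) p volume
      ≤ eLpNorm (s • trigPoly F (φ * a)) p volume + eLpNorm (t • trigPoly F (ψ * a)) p volume := by
        rw [combine]
        exact eLpNorm_add_le ((meas φ).const_smul s) ((meas ψ).const_smul t) hp
    _ ≤ ‖s‖ₑ * K + ‖t‖ₑ * K := by
        rw [eLpNorm_const_smul, eLpNorm_const_smul]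
        gcongr
        exacts [hφ, hψ]
    _ = K := by
        rw [← add_mul, Real.enorm_of_nonneg hs, Real.enorm_of_nonneg ht,
          ← ENNReal.ofReal_add hs ht, hst, ENNReal.ofReal_one, one_mul]

lemma eLpNorm_trigPoly_mul_le {φ : ℤ → ℂ} (hφ : φ ∈ finTransforms) (F : Finset ℤ) (a : ℤ → ℂ)
    {p : ENNReal} (hp : 1 ≤ p) :
    eLpNorm (trigPoly F (φ * a)) p volume ≤ eLpNorm (trigPoly F a) p volume := by
  refine convexHull_min ?_ (convex_setOf_eLpNorm_trigPoly_mul_le F a hp _) hφ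
  rintro _ ⟨ζ, hζ, rfl⟩
  obtain ⟨y, hy⟩ := exists_fourier_eq_zpow (mem_sphere_zero_iff_norm.1 hζ)
  change eLpNorm (trigPoly F ((fun z => ζ ^ z) * a)) p volume ≤ _
  rw [← hy, trigPoly_fourier_mul]
  exact (eLpNorm_comp_measurePreserving (continuous_trigPoly F a).aestronglyMeasurable
    (measurePreserving_add_right volume y)).le

lemma lintegral_trigPoly_mul_pow_le {φ : ℤ → ℂ} (hφ : φ ∈ finTransforms) (F : Finset ℤ)
    (a : ℤ → ℂ) {n : ℕ} (hn : 1 ≤ n) :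
    ∫⁻ x, ‖trigPoly F (φ * a) x‖ₑ ^ n ≤ ∫⁻ x, ‖trigPoly F a x‖ₑ ^ n := by
  have hn₀ : (n : NNReal) ≠ 0 := by exact_mod_cast (by omega : n ≠ 0)
  have eq_pow (f : UnitAddCircle → ℂ) :
      ∫⁻ x, ‖f x‖ₑ ^ n = eLpNorm f (n : NNReal) volume ^ n := by
    simpa using (eLpNorm_nnreal_pow_eq_lintegral (f := f) hn₀).symm
  rw [eq_pow, eq_pow]
  gcongr
  exact eLpNorm_trigPoly_mul_le hφ F a (by exact_mod_cast hn)

lemma lintegral_trigPoly_pow_le_walsh {n N : ℕ} (hn : 1 ≤ n) {F : Finset ℤ}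
    (hF : ∀ z ∈ F, nafSupport z ⊆ Finset.range N) (c : ℤ → ℂ) (A : Finset ℕ) :
    ∫⁻ x, ‖trigPoly F c x‖ₑ ^ n ≤
      ∫⁻ x, ‖trigPoly F
        (fun z => walsh A (nafSupport z) * (8 ^ #(nafSupport z) * c z)) x‖ₑ ^ n := by
  obtain ⟨φ, hφ, hφz⟩ := exists_mem_finTransforms_eq_walsh_div N A
  refine Eq.trans_le ?_ (lintegral_trigPoly_mul_pow_le hφ F _ hn)
  rw [trigPoly_congr fun z hz => ?_]
  have hwalsh : (walsh A (nafSupport z) : ℂ) * walsh A (nafSupport z) = 1 :=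
    mod_cast walsh_mul_self A (nafSupport z)
  rw [Pi.mul_apply, hφz z (hF z hz)]
  field_simp
  linear_combination (-c z) * hwalsh

lemma sum_norm_trigPoly_walsh_pow_le {q : ℕ} (hq : 1 ≤ q) {s : Finset ℕ} {F : Finset ℤ}
    (hF : ∀ z ∈ F, nafSupport z ⊆ s) (b : ℤ → ℂ) (x : UnitAddCircle) :
    ∑ A ∈ s.powerset, ‖trigPoly F (fun z => walsh A (nafSupport z) * b z) x‖ ^ (2 * q) ≤
      2 ^ #s * (∑ z ∈ F, (8 * q : ℝ) ^ #(nafSupport z) * ‖b z‖ ^ 2) ^ q := by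
  have h := sum_norm_sum_walsh_nafSupport_smul_pow_le hq hF fun z => b z * fourier z x
  simpa only [trigPoly, Complex.real_smul, mul_assoc, norm_mul, fourier_apply, Circle.norm_coe,
    mul_one] using h

lemma lintegral_trigPoly_pow_le {q : ℕ} (hq : 1 ≤ q) (F : Finset ℤ) (c : ℤ → ℂ) :
    ∫⁻ x, ‖trigPoly F c x‖ₑ ^ (2 * q) ≤
      ENNReal.ofReal ((∑ z ∈ F, (512 * q : ℝ) ^ #(nafSupport z) * ‖c z‖ ^ 2) ^ q) := by
  obtain ⟨N, hN⟩ := exists_nafSupport_subset_range F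
  set s := Finset.range N
  set M := ∑ z ∈ F, (512 * q : ℝ) ^ #(nafSupport z) * ‖c z‖ ^ 2
  set P : Finset ℕ → UnitAddCircle → ℂ :=
    fun A => trigPoly F fun z => walsh A (nafSupport z) * (8 ^ #(nafSupport z) * c z)
  have sum_le (x : UnitAddCircle) :
      ∑ A ∈ s.powerset, ‖P A x‖ₑ ^ (2 * q) ≤ ENNReal.ofReal (2 ^ #s * M ^ q) := by
    simp_rw [← ofReal_norm, ← ENNReal.ofReal_pow (norm_nonneg _)]
    rw [← ENNReal.ofReal_sum_of_nonneg fun _ _ => by positivity]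
    gcongr
    refine (sum_norm_trigPoly_walsh_pow_le hq hN _ x).trans_eq ?_
    congr 2
    refine Finset.sum_congr rfl fun z _ => ?_
    rw [norm_mul, norm_pow, RCLike.norm_ofNat, show (512 * q : ℝ) = 8 * q * 8 ^ 2 by ring,
      mul_pow (8 * q : ℝ), pow_right_comm (8 : ℝ), mul_pow _ ‖c z‖, mul_assoc]
  have average : (2 ^ #s : ENNReal) * ∫⁻ x, ‖trigPoly F c x‖ₑ ^ (2 * q) ≤
      2 ^ #s * ENNReal.ofReal (M ^ q) := by
    calc (2 ^ #s : ENNReal) * ∫⁻ x, ‖trigPoly F c x‖ₑ ^ (2 * q)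
        = ∑ _A ∈ s.powerset, ∫⁻ x, ‖trigPoly F c x‖ₑ ^ (2 * q) := by
          simp
      _ ≤ ∑ A ∈ s.powerset, ∫⁻ x, ‖P A x‖ₑ ^ (2 * q) :=
          Finset.sum_le_sum fun A _ => lintegral_trigPoly_pow_le_walsh (by omega) hN c A
      _ = ∫⁻ x, ∑ A ∈ s.powerset, ‖P A x‖ₑ ^ (2 * q) :=
          (lintegral_finsetSum _ fun A _ =>
            ((continuous_trigPoly F _).measurable.enorm.pow_const _)).symm
      _ ≤ ∫⁻ _ : UnitAddCircle, ENNReal.ofReal (2 ^ #s * M ^ q) := lintegral_mono sum_le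
      _ = 2 ^ #s * ENNReal.ofReal (M ^ q) := by
          simp [ENNReal.ofReal_mul, ENNReal.ofReal_pow]
  exact (ENNReal.mul_le_mul_iff_right (by simp) (by simp)).1 average

/-! ### Orlicz duality -/

lemma one_le_log_exp_one_add {s : ℝ} (hs : 0 ≤ s) : 1 ≤ log (exp 1 + s) := by
  rw [Real.le_log_iff_exp_le (by positivity)]
  exact le_add_of_nonneg_right hs

lemma Bfun_nonneg (σ : ℝ) {t : ℝ} (ht : 0 ≤ t) : 0 ≤ Bfun σ t :=
  mul_nonneg ht (rpow_nonneg (zero_le_one.trans (one_le_log_exp_one_add ht)) σ)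

lemma measurable_Bfun (σ : ℝ) : Measurable (Bfun σ) := by
  unfold Bfun; fun_prop

lemma Bfun_mul_le {σ a b t : ℝ} (hσ : 0 ≤ σ) (ha : 0 ≤ a) (hab : a ≤ b) (hb : 1 ≤ b)
    (ht : 0 ≤ t) : Bfun σ (a * t) ≤ b * (1 + log b) ^ σ * Bfun σ t := by
  have hlogb : 0 ≤ log b := log_nonneg hb
  have hlog := one_le_log_exp_one_add ht
  have hlog' := one_le_log_exp_one_add (mul_nonneg ha ht)
  have log_le : log (exp 1 + a * t) ≤ (1 + log b) * log (exp 1 + t) := by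
    calc log (exp 1 + a * t) ≤ log (b * (exp 1 + t)) := by
          refine log_le_log (by positivity) ?_
          rw [mul_add]
          exact add_le_add (le_mul_of_one_le_left (exp_pos 1).le hb) (by gcongr)
      _ = log b + log (exp 1 + t) := log_mul (by positivity) (by positivity)
      _ ≤ (1 + log b) * log (exp 1 + t) := by nlinarith
  calc Bfun σ (a * t) ≤ b * t * ((1 + log b) * log (exp 1 + t)) ^ σ := by
        unfold Bfun; gcongr
    _ = b * (1 + log b) ^ σ * Bfun σ t := by
        rw [mul_rpow (by positivity) (by positivity), Bfun]; ring

lemma integrable_Bfun_const_mul_norm {α E : Type*} [MeasurableSpace α] {μ : Measure α}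
    [NormedAddCommGroup E] {f : α → E} {σ a : ℝ} (hσ : 0 ≤ σ) (ha : 0 ≤ a)
    (hf : AEStronglyMeasurable f μ) (hB : Integrable (fun x => Bfun σ ‖f x‖) μ) :
    Integrable (fun x => Bfun σ (a * ‖f x‖)) μ := by
  refine (hB.const_mul (max 1 a * (1 + log (max 1 a)) ^ σ)).mono'
    ((measurable_Bfun σ).comp_aemeasurable (hf.norm.aemeasurable.const_mul a)).aestronglyMeasurable
    (ae_of_all _ fun x => ?_)
  rw [Real.norm_of_nonneg (Bfun_nonneg σ (by positivity))]
  exact Bfun_mul_le hσ ha (le_max_right _ _) (le_max_left _ _) (norm_nonneg _)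

/-- The exponent is chosen by `n + 1 = ⌊log (e + s)⌋`, so that the second alternative is needed
only when `t > R (n + 1) ^ σ`. -/
lemma mul_le_Bfun_or_exists_mul_le_pow {σ R s t : ℝ} (hσ : 0 ≤ σ) (hR : 0 < R)
    (hs : 0 ≤ s) : s * t ≤ R * Bfun σ s ∨ ∃ n : ℕ,
      s * t ≤ exp (n + 2) * (R * (n + 1) ^ σ) * (t / (R * (n + 1) ^ σ)) ^ (2 * (n + 1)) := by
  have hlog := one_le_log_exp_one_add hs
  obtain ⟨n, hn⟩ := Nat.exists_eq_add_of_le' ((Nat.one_le_floor_iff _).2 hlog)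
  have hle : (n : ℝ) + 1 ≤ log (exp 1 + s) := by
    exact_mod_cast hn ▸ Nat.floor_le (zero_le_one.trans hlog)
  have hlt : log (exp 1 + s) < n + 2 := by
    have := Nat.lt_floor_add_one (log (exp 1 + s))
    rw [hn] at this
    push_cast at this
    linarith
  have hv : 0 < R * ((n : ℝ) + 1) ^ σ := by positivity
  rcases le_or_gt t (R * (n + 1) ^ σ) with h | h
  · left
    calc s * t ≤ s * (R * log (exp 1 + s) ^ σ) := by
          refine mul_le_mul_of_nonneg_left (h.trans ?_) hs
          gcongr
      _ = R * Bfun σ s := by rw [Bfun]; ring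
  · right
    have hs' : s ≤ exp (n + 2) := by
      linarith [(log_lt_iff_lt_exp (by positivity)).1 hlt, exp_pos 1]
    have htv : 1 ≤ t / (R * (n + 1) ^ σ) := (one_le_div hv).2 h.le
    refine ⟨n, ?_⟩
    calc s * t = s * (R * (n + 1) ^ σ) * (t / (R * (n + 1) ^ σ)) := by field_simp
      _ ≤ exp (n + 2) * (R * (n + 1) ^ σ) * (t / (R * (n + 1) ^ σ)) ^ (2 * (n + 1)) := by
          gcongr
          exact le_self_pow₀ htv (by omega)

/-- A constant in the duality between the Orlicz space `L log^σ L` and the functions whose `L^{2n}`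
norms grow at most like `n ^ σ`. -/
def dualityConst (σ : ℝ) : ℝ := 4 * (1 + ∑' n : ℕ, exp (n + 2) * (n + 1) ^ σ / 16 ^ (n + 1))

lemma summable_dualityConst (σ : ℝ) :
    Summable fun n : ℕ => exp (n + 2) * (n + 1 : ℝ) ^ σ / 16 ^ (n + 1) := by
  have hr : ‖exp 1 / 16‖ < 1 := by
    rw [Real.norm_of_nonneg (by positivity)]
    linarith [exp_one_lt_d9]
  have hgeom : Summable fun n : ℕ => ((n + 1 : ℕ) : ℝ) ^ ⌈σ⌉₊ * (exp 1 / 16) ^ (n + 1) :=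
    (summable_nat_add_iff (f := fun n : ℕ => (n : ℝ) ^ ⌈σ⌉₊ * (exp 1 / 16) ^ n) 1).2
      (summable_pow_mul_geometric_of_norm_lt_one ⌈σ⌉₊ hr)
  refine Summable.of_nonneg_of_le (fun n => by positivity) (fun n => ?_) (hgeom.mul_left (exp 1))
  have hexp : exp (n + 2) = exp 1 * exp 1 ^ (n + 1) := by
    rw [← pow_succ', exp_one_pow]; push_cast; ring_nf
  calc exp (n + 2) * (n + 1 : ℝ) ^ σ / 16 ^ (n + 1)
      ≤ exp (n + 2) * (n + 1 : ℝ) ^ ⌈σ⌉₊ / 16 ^ (n + 1) := by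
        gcongr
        rw [← rpow_natCast]
        exact rpow_le_rpow_of_exponent_le (by linarith [n.cast_nonneg (α := ℝ)]) (Nat.le_ceil σ)
    _ = exp 1 * (((n + 1 : ℕ) : ℝ) ^ ⌈σ⌉₊ * (exp 1 / 16) ^ (n + 1)) := by
        rw [hexp, div_pow]; push_cast; ring

lemma dualityConst_pos (σ : ℝ) : 0 < dualityConst σ := by
  have : 0 ≤ ∑' n : ℕ, exp (n + 2) * (n + 1 : ℝ) ^ σ / 16 ^ (n + 1) :=
    tsum_nonneg fun n => by positivity
  unfold dualityConst
  positivity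

section Duality

variable {α E E' : Type*} [NormedAddCommGroup E] [NormedAddCommGroup E']

lemma enorm_mul_enorm_le_Bfun_add_tsum {σ R : ℝ} (hσ : 0 ≤ σ) (hR : 0 < R) (u : E) (v : E') :
    ‖u‖ₑ * ‖v‖ₑ ≤ ENNReal.ofReal R * ENNReal.ofReal (Bfun σ ‖u‖) +
      ∑' n : ℕ, ENNReal.ofReal
        (exp (n + 2) * (R * (n + 1) ^ σ) / (R * (n + 1) ^ σ) ^ (2 * (n + 1))) *
        ‖v‖ₑ ^ (2 * (n + 1)) := by
  rw [← ofReal_norm u, ← ofReal_norm v, ← ENNReal.ofReal_mul (norm_nonneg u)]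
  rcases mul_le_Bfun_or_exists_mul_le_pow hσ hR (norm_nonneg u) (t := ‖v‖) with h | ⟨n, h⟩
  · rw [← ENNReal.ofReal_mul hR.le]
    exact (ENNReal.ofReal_le_ofReal h).trans le_self_add
  · refine le_add_left (le_trans ?_ (ENNReal.le_tsum n))
    rw [← ENNReal.ofReal_pow (norm_nonneg v), ← ENNReal.ofReal_mul (by positivity)]
    refine ENNReal.ofReal_le_ofReal (h.trans_eq ?_)
    rw [div_pow, div_mul_eq_mul_div, mul_div_assoc]

lemma div_four_mul_pow_mul_pow {x : ℝ} (hx : x ≠ 0) (a : ℝ) (m : ℕ) :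
    a / (4 * x) ^ (2 * m) * x ^ (2 * m) = a / 16 ^ m := by
  rw [mul_pow, pow_mul 4 2, show (4 : ℝ) ^ 2 = 16 by norm_num]
  field_simp

lemma lintegral_enorm_mul_enorm_le_add_tsum [MeasurableSpace α] {μ : Measure α} {σ R : ℝ}
    (hσ : 0 ≤ σ) (hR : 0 < R) (g : α → E) {P : α → E'} (hP : AEStronglyMeasurable P μ) :
    ∫⁻ x, ‖g x‖ₑ * ‖P x‖ₑ ∂μ ≤
      ENNReal.ofReal R * ∫⁻ x, ENNReal.ofReal (Bfun σ ‖g x‖) ∂μ +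
        ∑' n : ℕ, ENNReal.ofReal
          (exp (n + 2) * (R * (n + 1) ^ σ) / (R * (n + 1) ^ σ) ^ (2 * (n + 1))) *
          ∫⁻ x, ‖P x‖ₑ ^ (2 * (n + 1)) ∂μ := by
  have hPm (n : ℕ) : AEMeasurable (fun x => ‖P x‖ₑ ^ (2 * (n + 1))) μ := hP.enorm.pow_const _
  refine (lintegral_mono fun x => enorm_mul_enorm_le_Bfun_add_tsum hσ hR (g x) (P x)).trans_eq ?_
  rw [lintegral_add_right' _ (AEMeasurable.tsum fun n => (hPm n).const_mul _),
    lintegral_const_mul' _ _ ENNReal.ofReal_ne_top,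
    lintegral_tsum fun n => (hPm n).const_mul _]
  simp_rw [lintegral_const_mul' _ _ ENNReal.ofReal_ne_top]

lemma lintegral_enorm_mul_enorm_le [MeasurableSpace α] {μ : Measure α} {σ K : ℝ} (hσ : 0 ≤ σ)
    (hK : 0 < K) {g : α → E} {P : α → E'} (hP : AEStronglyMeasurable P μ)
    (hg : ∫⁻ x, ENNReal.ofReal (Bfun σ ‖g x‖) ∂μ ≤ 1)
    (hPn : ∀ n : ℕ, 1 ≤ n →
      ∫⁻ x, ‖P x‖ₑ ^ (2 * n) ∂μ ≤ ENNReal.ofReal ((K * n ^ σ) ^ (2 * n))) :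
    ∫⁻ x, ‖g x‖ₑ * ‖P x‖ₑ ∂μ ≤ ENNReal.ofReal (dualityConst σ * K) := by
  have term_le (n : ℕ) :
      ENNReal.ofReal
          (exp (n + 2) * (4 * K * (n + 1) ^ σ) / (4 * K * (n + 1) ^ σ) ^ (2 * (n + 1))) *
          ∫⁻ x, ‖P x‖ₑ ^ (2 * (n + 1)) ∂μ ≤
        ENNReal.ofReal (4 * K * (exp (n + 2) * (n + 1) ^ σ / 16 ^ (n + 1))) := by
    refine (mul_le_mul_right (hPn (n + 1) (by omega)) _).trans_eq ?_
    rw [← ENNReal.ofReal_mul (by positivity), Nat.cast_succ, mul_assoc 4 K,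
      div_four_mul_pow_mul_pow (by positivity)]
    congr 1
    ring
  calc ∫⁻ x, ‖g x‖ₑ * ‖P x‖ₑ ∂μ
      ≤ _ := lintegral_enorm_mul_enorm_le_add_tsum hσ (by positivity : 0 < 4 * K) g hP
    _ ≤ ENNReal.ofReal (4 * K) * 1 +
          ∑' n : ℕ, ENNReal.ofReal (4 * K * (exp (n + 2) * (n + 1) ^ σ / 16 ^ (n + 1))) := by
        gcongr with n
        exact term_le n
    _ = ENNReal.ofReal (dualityConst σ * K) := by
        rw [← ENNReal.ofReal_tsum_of_nonneg (fun n => by positivity)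
          ((summable_dualityConst σ).mul_left _), tsum_mul_left, mul_one,
          ← ENNReal.ofReal_add (by positivity) (by positivity), dualityConst]
        congr 1
        ring

end Duality

/-! ### Fourier coefficients at sparse integers -/

lemma lintegral_trigPoly_pow_le_of_card_nafSupport_le {q τ : ℕ} (hq : 1 ≤ q) {F : Finset ℤ}
    (hF : ∀ z ∈ F, #(nafSupport z) ≤ τ) {c : ℤ → ℂ} (hc : ∑ z ∈ F, ‖c z‖ ^ 2 = 1) :
    ∫⁻ x, ‖trigPoly F c x‖ₑ ^ (2 * q) ≤
      ENNReal.ofReal ((√(512 ^ τ) * (q : ℝ) ^ ((τ : ℝ) / 2)) ^ (2 * q)) := by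
  refine (lintegral_trigPoly_pow_le hq F c).trans (ENNReal.ofReal_le_ofReal ?_)
  have hbase : (1 : ℝ) ≤ 512 * q := by
    have : (1 : ℝ) ≤ q := mod_cast hq
    linarith
  have hsq : (√(512 ^ τ) * (q : ℝ) ^ ((τ : ℝ) / 2)) ^ 2 = (512 * q) ^ τ := by
    rw [mul_pow, sq_sqrt (by positivity), ← rpow_mul_natCast q.cast_nonneg, Nat.cast_ofNat,
      div_mul_cancel₀ _ two_ne_zero, rpow_natCast, mul_pow]
  rw [pow_mul, hsq]
  gcongr
  calc ∑ z ∈ F, (512 * q : ℝ) ^ #(nafSupport z) * ‖c z‖ ^ 2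
      ≤ ∑ z ∈ F, (512 * q : ℝ) ^ τ * ‖c z‖ ^ 2 := by
        gcongr with z hz
        exact hF z hz
    _ = (512 * q : ℝ) ^ τ := by rw [← Finset.mul_sum, hc, mul_one]

lemma sum_norm_sq_le_of_forall_norm_sum_mul_le {ι : Type*} {F : Finset ι} {v : ι → ℂ} {C : ℝ}
    (h : ∀ c : ι → ℂ, ∑ z ∈ F, ‖c z‖ ^ 2 = 1 → ‖∑ z ∈ F, c z * v z‖ ≤ C) :
    ∑ z ∈ F, ‖v z‖ ^ 2 ≤ C ^ 2 := by
  set D := ∑ z ∈ F, ‖v z‖ ^ 2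
  have hD0 : 0 ≤ D := Finset.sum_nonneg fun _ _ => by positivity
  rcases hD0.eq_or_lt with h0 | hpos
  · rw [← h0]; positivity
  have hs : 0 < √D := sqrt_pos.2 hpos
  have hss : √D ^ 2 = D := sq_sqrt hD0
  have unit : ∑ z ∈ F, ‖starRingEnd ℂ (v z) / (√D : ℂ)‖ ^ 2 = 1 := by
    simp only [norm_div, RCLike.norm_conj, Complex.norm_real, norm_of_nonneg hs.le, div_pow,
      ← Finset.sum_div, hss]
    exact div_self hpos.ne'
  have pairing : ∑ z ∈ F, starRingEnd ℂ (v z) / (√D : ℂ) * v z = (√D : ℝ) := by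
    simp_rw [div_mul_eq_mul_div, Complex.conj_mul', ← Finset.sum_div]
    rw [div_eq_iff (by exact_mod_cast hs.ne'), ← sq]
    exact_mod_cast hss.symm
  have hle := h _ unit
  rw [pairing, Complex.norm_real, norm_of_nonneg hs.le] at hle
  rw [← hss]
  gcongr

lemma sum_norm_sq_integral_mul_le {α ι : Type*} [MeasurableSpace α] {μ : Measure α}
    {F : Finset ι} {g : α → ℂ} {e : ι → α → ℂ} {C : ℝ} (hC : 0 ≤ C)
    (h_int : ∀ z ∈ F, Integrable (fun x => g x * e z x) μ)
    (h : ∀ c : ι → ℂ, ∑ z ∈ F, ‖c z‖ ^ 2 = 1 →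
      ∫⁻ x, ‖g x‖ₑ * ‖∑ z ∈ F, c z * e z x‖ₑ ∂μ ≤ ENNReal.ofReal C) :
    ∑ z ∈ F, ‖∫ x, g x * e z x ∂μ‖ ^ 2 ≤ C ^ 2 := by
  refine sum_norm_sq_le_of_forall_norm_sum_mul_le fun c hc => ?_
  have pairing : ∑ z ∈ F, c z * ∫ x, g x * e z x ∂μ = ∫ x, g x * ∑ z ∈ F, c z * e z x ∂μ := by
    simp_rw [← integral_const_mul, Finset.mul_sum, mul_left_comm (g _)]
    exact (integral_finsetSum _ fun z hz => (h_int z hz).const_mul _).symm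
  rw [pairing, ← ENNReal.ofReal_le_ofReal_iff hC, ofReal_norm]
  refine (enorm_integral_le_lintegral_enorm _).trans (le_trans ?_ (h c hc))
  simp_rw [enorm_mul, le_refl]

lemma fourier_neg_coe_eq_exp (z : ℤ) (x : ℝ) :
    fourier (-z) (x : UnitAddCircle) = Complex.exp (-Complex.I * ((2 * π * z * x : ℝ) : ℂ)) := by
  rw [fourier_coe_apply]
  congr 1
  push_cast
  ring

lemma integrableOn_mul_fourier {g : ℝ → ℂ} {s : Set ℝ} (hg : IntegrableOn g s) (n : ℤ) :
    IntegrableOn (fun x => g x * fourier n (x : UnitAddCircle)) s := by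
  refine hg.mul_bdd (c := 1) ?_ (ae_of_all _ fun x => (Circle.norm_coe _).le)
  exact ((map_continuous (fourier n)).comp (AddCircle.continuous_mk' 1)).aestronglyMeasurable

lemma sum_norm_sq_integral_mul_fourier_le {τ : ℕ} {F : Finset ℤ}
    (hF : ∀ z ∈ F, #(nafSupport z) ≤ τ) {g : ℝ → ℂ} (hg : IntegrableOn g (Ioc 0 1))
    (hmod : ∫⁻ x in Ioc (0 : ℝ) 1, ENNReal.ofReal (Bfun ((τ : ℝ) / 2) ‖g x‖) ≤ 1) :
    ∑ z ∈ F, ‖∫ x in Ioc (0 : ℝ) 1, g x * fourier (-z) (x : UnitAddCircle)‖ ^ 2 ≤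
      (dualityConst ((τ : ℝ) / 2) * √(512 ^ τ)) ^ 2 := by
  refine sum_norm_sq_integral_mul_le (mul_nonneg (dualityConst_pos _).le (sqrt_nonneg _))
    (fun z _ => integrableOn_mul_fourier hg (-z)) fun c hc => ?_
  have conj_sum (x : ℝ) : ‖∑ z ∈ F, c z * fourier (-z) (x : UnitAddCircle)‖ₑ =
      ‖trigPoly F (fun z => starRingEnd ℂ (c z)) x‖ₑ := by
    rw [← RCLike.enorm_conj, trigPoly, map_sum]
    simp_rw [fourier_neg, map_mul, Complex.conj_conj]
  simp_rw [conj_sum]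
  refine lintegral_enorm_mul_enorm_le (by positivity) (by positivity)
    ((continuous_trigPoly F _).comp (AddCircle.continuous_mk' 1)).aestronglyMeasurable hmod
    fun n hn => ?_
  have transfer := UnitAddCircle.lintegral_preimage 0
    fun y => ‖trigPoly F (fun z => starRingEnd ℂ (c z)) y‖ₑ ^ (2 * n)
  rw [zero_add] at transfer
  rw [transfer]
  exact lintegral_trigPoly_pow_le_of_card_nafSupport_le hn hF (by simpa using hc)

lemma lintegral_Bfun_le_one {f : ℝ → ℂ} {s : Set ℝ} {σ a : ℝ} (hσ : 0 ≤ σ) (ha : 0 ≤ a)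
    (hf : IntegrableOn f s) (hB : IntegrableOn (fun x => Bfun σ ‖f x‖) s)
    (hmod : ∫ x in s, Bfun σ (a * ‖f x‖) ≤ 1) :
    ∫⁻ x in s, ENNReal.ofReal (Bfun σ (a * ‖f x‖)) ≤ 1 := by
  rw [← ofReal_integral_eq_lintegral_ofReal
    (integrable_Bfun_const_mul_norm hσ ha hf.aestronglyMeasurable hB)
    (ae_of_all _ fun x => Bfun_nonneg σ (by positivity))]
  exact ENNReal.ofReal_le_one.2 hmod

lemma sum_norm_sq_integral_mul_fourier_le_mul_sq {τ : ℕ} {F : Finset ℤ}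
    (hF : ∀ z ∈ F, #(nafSupport z) ≤ τ) {f : ℝ → ℂ} (hf : IntegrableOn f (Ioc 0 1))
    (hB : IntegrableOn (fun x => Bfun ((τ : ℝ) / 2) ‖f x‖) (Ioc 0 1)) {lam : ℝ} (hlam : 0 < lam)
    (hmod : ∫ x in Ioc (0 : ℝ) 1, Bfun ((τ : ℝ) / 2) (‖f x‖ / lam) ≤ 1) :
    ∑ z ∈ F, ‖∫ x in Ioc (0 : ℝ) 1, f x * fourier (-z) (x : UnitAddCircle)‖ ^ 2 ≤
      (dualityConst ((τ : ℝ) / 2) * √(512 ^ τ) * lam) ^ 2 := by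
  have norm_smul_f (x : ℝ) : ‖lam⁻¹ • f x‖ = lam⁻¹ * ‖f x‖ :=
    norm_smul_of_nonneg (inv_nonneg.2 hlam.le) _
  simp_rw [div_eq_inv_mul _ lam] at hmod
  have hmod' := lintegral_Bfun_le_one (by positivity) (inv_nonneg.2 hlam.le) hf hB hmod
  simp_rw [← norm_smul_f] at hmod'
  have hsum := sum_norm_sq_integral_mul_fourier_le hF (hf.smul lam⁻¹) hmod'
  simp_rw [Pi.smul_apply, smul_mul_assoc, integral_smul,
    norm_smul_of_nonneg (inv_nonneg.2 hlam.le), mul_pow (lam⁻¹), ← Finset.mul_sum] at hsum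
  rwa [inv_pow, inv_mul_le_iff₀ (by positivity), mul_comm, ← mul_pow] at hsum

/-! ### Lacunary endpoints -/

lemma exists_natCast_eq_of_one_le_two_zpow {k : ℤ} (hk : (1 : ℝ) ≤ 2 ^ k) : ∃ n : ℕ, k = n := by
  refine Int.eq_ofNat_of_zero_le ?_
  by_contra! h
  exact absurd hk (not_le.2 (zpow_lt_one_of_neg₀ one_lt_two h))

/-- The integers whose non-adjacent form has at most `τ` nonzero digits, as real numbers. -/
def nafSparse (τ : ℕ) : Set ℝ := (↑) '' {z : ℤ | #(nafSupport z) ≤ τ}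

lemma add_two_pow_mem_nafSparse {τ : ℕ} {x : ℝ} (hx : x ∈ nafSparse τ) (n : ℕ) :
    x + 2 ^ n ∈ nafSparse (τ + 1) := by
  obtain ⟨z, hz, rfl⟩ := hx
  exact ⟨z + 2 ^ n, (card_nafSupport_add_two_pow_le n z).trans (Nat.succ_le_succ hz), by simp⟩

lemma sub_two_pow_mem_nafSparse {τ : ℕ} {x : ℝ} (hx : x ∈ nafSparse τ) (n : ℕ) :
    x - 2 ^ n ∈ nafSparse (τ + 1) := by
  obtain ⟨z, hz, rfl⟩ := hx
  exact ⟨z - 2 ^ n, (card_nafSupport_sub_two_pow_le n z).trans (Nat.succ_le_succ hz), by simp⟩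

lemma zero_mem_nafSparse (τ : ℕ) : 0 ∈ nafSparse τ :=
  ⟨0, by simp [nafSupport_zero], Int.cast_zero⟩

lemma exists_endpoints_eq_of_mem_WhitneyP {I L : ℝ × ℝ} (hL : L ∈ WhitneyP I)
    (hlen : 1 ≤ L.2 - L.1) : ∃ n : ℕ,
      (L.1 = I.1 + 2 ^ n ∧ L.2 = I.1 + 2 ^ (n + 1)) ∨
        (L.1 = I.2 - 2 ^ (n + 1) ∧ L.2 = I.2 - 2 ^ n) := by
  obtain ⟨⟨k, m, hL1, hL2⟩, -, -, hmin, -⟩ := hL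
  have hlen' : L.2 - L.1 = 2 ^ k := by rw [hL1, hL2]; ring
  obtain ⟨n, rfl⟩ := exists_natCast_eq_of_one_le_two_zpow (hlen'.subst hlen)
  rw [zpow_natCast] at hlen'
  refine ⟨n, ?_⟩
  rcases min_choice (L.1 - I.1) (I.2 - L.2) with h | h <;> rw [h] at hmin <;> rw [pow_succ]
  · left; constructor <;> linarith
  · right; constructor <;> linarith

lemma exists_endpoints_eq_of_mem_Lambda_one {I : ℝ × ℝ} (hI : I ∈ Lambda 1)
    (hlen : 1 ≤ I.2 - I.1) : ∃ n : ℕ,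
      (I.1 = 2 ^ n ∧ I.2 = 2 ^ (n + 1)) ∨ (I.1 = -2 ^ (n + 1) ∧ I.2 = -2 ^ n) := by
  obtain ⟨k, rfl | rfl⟩ := hI <;> rw [zpow_add_one₀ two_ne_zero] at hlen ⊢
  all_goals
    obtain ⟨n, rfl⟩ := exists_natCast_eq_of_one_le_two_zpow (k := k) (by linarith)
    refine ⟨n, ?_⟩
    simp [pow_succ]

lemma mem_nafSparse_of_mem_Lambda {τ : ℕ} : ∀ {I : ℝ × ℝ}, I ∈ Lambda τ → 1 ≤ I.2 - I.1 →
    I.1 ∈ nafSparse τ ∧ I.2 ∈ nafSparse τ := by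
  induction τ using Lambda.induct with
  | case1 => intro I hI; exact hI.elim
  | case2 =>
    intro I hI hlen
    have two_pow_mem (n : ℕ) : (2 : ℝ) ^ n ∈ nafSparse 1 := by
      simpa using add_two_pow_mem_nafSparse (zero_mem_nafSparse 0) n
    have neg_two_pow_mem (n : ℕ) : -(2 : ℝ) ^ n ∈ nafSparse 1 := by
      simpa using sub_two_pow_mem_nafSparse (zero_mem_nafSparse 0) n
    obtain ⟨n, ⟨h1, h2⟩ | ⟨h1, h2⟩⟩ := exists_endpoints_eq_of_mem_Lambda_one hI hlen <;>
      rw [h1, h2]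
    · exact ⟨two_pow_mem _, two_pow_mem _⟩
    · exact ⟨neg_two_pow_mem _, neg_two_pow_mem _⟩
  | case3 τ ih =>
    intro L hL hlen
    obtain ⟨I, hI, hLI⟩ := mem_iUnion₂.1 hL
    obtain ⟨hI1, hI2⟩ := ih hI (by linarith [hLI.2.1, hLI.2.2.1])
    obtain ⟨n, ⟨h1, h2⟩ | ⟨h1, h2⟩⟩ := exists_endpoints_eq_of_mem_WhitneyP hLI hlen <;>
      rw [h1, h2]
    · exact ⟨add_two_pow_mem_nafSparse hI1 _, add_two_pow_mem_nafSparse hI1 _⟩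
    · exact ⟨sub_two_pow_mem_nafSparse hI2 _, sub_two_pow_mem_nafSparse hI2 _⟩

lemma lacT_one_subset_nafSparse (τ : ℕ) : lacT τ 1 ⊆ nafSparse τ := by
  unfold lacT
  split_ifs with hτ
  · exact singleton_subset_iff.2 (zero_mem_nafSparse τ)
  · rintro x ⟨I, hI, hlen, rfl | rfl⟩
    exacts [(mem_nafSparse_of_mem_Lambda hI hlen).1, (mem_nafSparse_of_mem_Lambda hI hlen).2]

/-- Zygmund–Bonami inequality of order `τ`.  Let `τ ≥ 1` and
`f ∈ L log^{τ/2}L([0,1])`.  Then `(Σ_{λ ∈ lac_τ^1} |f̂(λ)|²)^{1/2} ≲_τ ‖f‖_{L log^{τ/2}L}`,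
where `f̂(λ) = ∫_{[0,1]} f(x) e^{−2πiλx} dx` and the Orlicz norm bound is expressed by a
modular condition: whenever `∫_{[0,1]} B_{τ/2}(|f|/lam) ≤ 1` the left-hand side is `≤ C·lam`. -/
theorem zygmund_bonami (τ : ℕ) (hτ : 1 ≤ τ) :
    ∃ C > 0, ∀ f : ℝ → ℂ, IntegrableOn f (Set.Ioc (0:ℝ) 1) →
      IntegrableOn (fun x => Bfun ((τ:ℝ)/2) ‖f x‖) (Set.Ioc (0:ℝ) 1) →
      ∀ lam : ℝ, 0 < lam →
      (∫ x in Set.Ioc (0:ℝ) 1, Bfun ((τ:ℝ)/2) (‖f x‖ / lam)) ≤ 1 →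
      Real.sqrt (∑' l : lacT τ 1,
        ‖∫ x in Set.Ioc (0:ℝ) 1,
            f x * Complex.exp (-Complex.I * ((2 * π * (l:ℝ) * x : ℝ) : ℂ))‖^2) ≤ C * lam := by
  refine ⟨dualityConst ((τ : ℝ) / 2) * √(512 ^ τ),
    mul_pos (dualityConst_pos _) (sqrt_pos.2 (by positivity)), fun f hf hB lam hlam hmod => ?_⟩
  have hC := dualityConst_pos ((τ : ℝ) / 2)
  choose z hz hzl using fun l : lacT τ 1 => lacT_one_subset_nafSparse τ l.2
  have z_injective : Function.Injective z := fun l l' h => Subtype.ext (by rw [← hzl, h, hzl])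
  refine Real.sqrt_le_iff.2 ⟨by positivity, Real.tsum_le_of_sum_le (fun _ => by positivity)
    fun s => ?_⟩
  simp_rw [← hzl, ← fourier_neg_coe_eq_exp]
  rw [← Finset.sum_image (s := s) (g := z) (f := fun n : ℤ =>
    ‖∫ x in Ioc (0 : ℝ) 1, f x * fourier (-n) (x : UnitAddCircle)‖ ^ 2) z_injective.injOn]
  exact sum_norm_sq_integral_mul_fourier_le_mul_sq (Finset.forall_mem_image.2 fun l _ => hz l)
    hf hB hlam hmod
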